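/- Let 4 ≤ p < q, n = p + q, and suppose 2p > q + 4. Every tree T ∈ 𝒯_n^{p,q} that is isomorphic to none of B_{p,q}^{0,0}, B_{p,q}^{0,1}, D_{p,q}^{0,1} satisfies T ≺_s D_{p,q}^{0,1}; that is, in this case D_{p,q}^{0,1} is the unique third last tree in the S-order among 𝒯_n^{p,q}. -/

import Mathlib

open SimpleGraph

open scoped Classical in
/-- The adjacency matrix of a simple graph, with real entries. -/
noncomputable def adjMat {V : Type*} [Fintype V] (G : SimpleGraph V) : Matrix V V ℝ :=
  Matrix.of fun a b => if G.Adj a b then 1 else 0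

/-- The `k`-th spectral moment `S_k(G) = tr(A(G)^k)`. -/
noncomputable def spectralMoment {V : Type*} [Fintype V] [DecidableEq V]
    (G : SimpleGraph V) (k : ℕ) : ℝ :=
  Matrix.trace (adjMat G ^ k)

/-- `SLt G₁ G₂` means `G₁ ≺_s G₂`: for some `k` with `1 ≤ k ≤ n - 1`,
`S_i(G₁) = S_i(G₂)` for all `i < k` and `S_k(G₁) < S_k(G₂)`. -/
def SLt {V : Type*} [Fintype V] [DecidableEq V] (G₁ G₂ : SimpleGraph V) : Prop :=
  ∃ k : ℕ, 1 ≤ k ∧ k ≤ Fintype.card V - 1 ∧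
    (∀ i < k, spectralMoment G₁ i = spectralMoment G₂ i) ∧
    spectralMoment G₁ k < spectralMoment G₂ k

/-- The tree `B_{p,q}^{k,l}` on `p + q` vertices: vertex `0 = u` is adjacent to `1 = v`
and to the `q - 1` vertices `2, …, q`; the distinguished neighbor `2` of `u` carries the
`k` pendant leaves `q+1, …, q+k`; the `l` neighbors `3, …, l+2` of `u` carry one pendant
leaf each (`q+k+j` is attached to `j+2` for `1 ≤ j ≤ l`); and `v` carries the
`p - k - l - 1` pendant leaves `q+k+l+1, …, p+q-1`. -/
def BTree (p q k l : ℕ) : SimpleGraph (Fin (p + q)) :=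
  SimpleGraph.fromRel (fun a b =>
    (a.val = 0 ∧ b.val = 1) ∨
    (a.val = 0 ∧ 2 ≤ b.val ∧ b.val ≤ q) ∨
    (a.val = 2 ∧ q + 1 ≤ b.val ∧ b.val ≤ q + k) ∨
    (q + k + 1 ≤ b.val ∧ b.val ≤ q + k + l ∧ a.val = b.val - (q + k) + 2) ∨
    (a.val = 1 ∧ q + k + l + 1 ≤ b.val))

/-- The tree `D_{p,q}^{k,l}` on `p + q` vertices: vertex `1 = v` is adjacent to `0 = u`
and to the `p - 1` vertices `2, …, p`; the distinguished neighbor `2` of `v` carries the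
`k` pendant leaves `p+1, …, p+k`; the `l` neighbors `3, …, l+2` of `v` carry one pendant
leaf each; and `u` carries the `q - k - l - 1` pendant leaves `p+k+l+1, …, p+q-1`. -/
def DTree (p q k l : ℕ) : SimpleGraph (Fin (p + q)) :=
  SimpleGraph.fromRel (fun a b =>
    (a.val = 0 ∧ b.val = 1) ∨
    (a.val = 1 ∧ 2 ≤ b.val ∧ b.val ≤ p) ∨
    (a.val = 2 ∧ p + 1 ≤ b.val ∧ b.val ≤ p + k) ∨
    (p + k + 1 ≤ b.val ∧ b.val ≤ p + k + l ∧ a.val = b.val - (p + k) + 2) ∨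
    (a.val = 0 ∧ p + k + l + 1 ≤ b.val))

/-- `T ∈ 𝒯_{p+q}^{p,q}`: `T` is a tree on `p + q` vertices with a `(p,q)`-bipartition. -/
def TreeBip (p q : ℕ) (G : SimpleGraph (Fin (p + q))) : Prop :=
  G.IsTree ∧ ∃ A : Finset (Fin (p + q)), A.card = p ∧
    ∀ ⦃x y : Fin (p + q)⦄, G.Adj x y → (x ∈ A ↔ y ∉ A)

/- In a tree on `n` vertices, `S_0, …, S_3` depend only on `n`, and
`S_4 = 2 ∑ d(x) ^ 2 - ∑ d(x)` because two vertices have at most one common neighbor; so it suffices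
to compare the sums of the squares of the degrees. The degrees in a part of size `m` of a
bipartition are positive and have sum `m + d - 1`, where `d` is the size of the other part. Among
such multisets the sum of squares is largest for `(d, 1, …, 1)`, second largest for
`(d - 1, 2, 1, …, 1)`, and otherwise at most `(d - 2) ^ 2 + 7 + m`. A degree equal to `d` means that
some vertex is adjacent to the whole other part; the tree then has height two around that vertex,
and it is determined by the degrees of its children. This identifies `B^{0,0}`, `B^{0,1}` and
`D^{0,1}`, and for every other pair of degree multisets the bounds add up to less than the value
for `D^{0,1}`. -/

section PositiveMultisets

variable {M : Multiset ℕ}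

theorem card_le_sum_of_forall_pos (hM : ∀ a ∈ M, 0 < a) : M.card ≤ M.sum := by
  simpa using Multiset.card_nsmul_le_sum fun a ha => Nat.one_le_iff_ne_zero.2 (hM a ha).ne'

theorem eq_replicate_one_of_sum_eq_card (hM : ∀ a ∈ M, 0 < a) (hsum : M.sum = M.card) :
    M = Multiset.replicate M.card 1 := by
  refine Multiset.eq_replicate_card.2 fun a ha => ?_
  obtain ⟨N, rfl⟩ := Multiset.exists_cons_of_mem ha
  have hN := card_le_sum_of_forall_pos fun b hb => hM b (Multiset.mem_cons_of_mem hb)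
  have ha := hM a ha
  simp only [Multiset.sum_cons, Multiset.card_cons] at hsum
  omega

theorem eq_cons_replicate_one_of_mem (hM : ∀ a ∈ M, 0 < a) {d : ℕ} (hd : d ∈ M)
    (hsum : M.sum + 1 = d + M.card) : M = d ::ₘ Multiset.replicate (M.card - 1) 1 := by
  obtain ⟨N, rfl⟩ := Multiset.exists_cons_of_mem hd
  simp only [Multiset.sum_cons, Multiset.card_cons] at hsum
  rw [Multiset.card_cons, Nat.add_sub_cancel, ← eq_replicate_one_of_sum_eq_card
    (fun a ha => hM a (Multiset.mem_cons_of_mem ha)) (by omega)]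

theorem two_mem_of_sum_eq_card_add_one (hM : ∀ a ∈ M, 0 < a) (hsum : M.sum = M.card + 1) :
    2 ∈ M := by
  obtain ⟨a, ha, ha1⟩ : ∃ a ∈ M, a ≠ 1 := by
    by_contra! hone
    rw [Multiset.eq_replicate_card.2 hone] at hsum
    simp at hsum
  obtain ⟨N, rfl⟩ := Multiset.exists_cons_of_mem ha
  have hN := card_le_sum_of_forall_pos fun b hb => hM b (Multiset.mem_cons_of_mem hb)
  have hapos := hM a ha
  simp only [Multiset.sum_cons, Multiset.card_cons] at hsum
  obtain rfl : a = 2 := by omega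
  exact ha

theorem eq_cons_two_cons_replicate_one_of_mem (hM : ∀ a ∈ M, 0 < a) {d : ℕ} (hd : d ∈ M)
    (hsum : M.sum = d + M.card) : M = d ::ₘ 2 ::ₘ Multiset.replicate (M.card - 2) 1 := by
  obtain ⟨N, rfl⟩ := Multiset.exists_cons_of_mem hd
  have hN : ∀ a ∈ N, 0 < a := fun a ha => hM a (Multiset.mem_cons_of_mem ha)
  rw [Multiset.sum_cons, Multiset.card_cons, add_right_inj] at hsum
  rw [Multiset.card_cons, Nat.add_sub_add_right, ← eq_cons_replicate_one_of_mem hN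
    (two_mem_of_sum_eq_card_add_one hN hsum) (by omega)]

theorem sum_sq_add_one_le (hM : ∀ a ∈ M, 0 < a) {d : ℕ} (hsum : M.sum + 1 = d + M.card) :
    (M.map (· ^ 2)).sum + 1 ≤ d ^ 2 + M.card := by
  induction M using Multiset.induction_on generalizing d with
  | empty =>
    obtain rfl : d = 1 := by simpa using hsum.symm
    simp
  | cons a N ih =>
    have hN : ∀ b ∈ N, 0 < b := fun b hb => hM b (Multiset.mem_cons_of_mem hb)
    have hcard := card_le_sum_of_forall_pos hN
    obtain ⟨k, rfl⟩ := Nat.exists_eq_add_of_le' (hM a (Multiset.mem_cons_self a N))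
    simp only [Multiset.sum_cons, Multiset.card_cons, Multiset.map_cons] at hsum ⊢
    obtain ⟨e, rfl⟩ : ∃ e, d = e + 1 + k := ⟨d - 1 - k, by omega⟩
    nlinarith [ih hN (d := e + 1) (by omega), Nat.zero_le (k * e)]

theorem sum_sq_le_of_mem (hM : ∀ a ∈ M, 0 < a) {d a : ℕ} (ha : a ∈ M) (ha3 : 3 ≤ a)
    (had : a + 2 ≤ d) (hsum : M.sum + 1 = d + M.card) :
    (M.map (· ^ 2)).sum ≤ (d - 2) ^ 2 + 7 + M.card := by
  obtain ⟨N, rfl⟩ := Multiset.exists_cons_of_mem ha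
  obtain ⟨i, rfl⟩ := Nat.exists_eq_add_of_le' ha3
  obtain ⟨j, rfl⟩ := Nat.exists_eq_add_of_le had
  simp only [Multiset.sum_cons, Multiset.card_cons, Multiset.map_cons] at hsum ⊢
  have hsq := sum_sq_add_one_le (fun b hb => hM b (Multiset.mem_cons_of_mem hb))
    (show N.sum + 1 = (j + 3) + N.card by omega)
  rw [show i + 3 + 2 + j - 2 = i + j + 3 by omega]
  nlinarith [Nat.zero_le (i * j)]

theorem sum_sq_add_two_mul_card_eq (hM : ∀ a ∈ M, 0 < a) (hM2 : ∀ a ∈ M, a ≤ 2) :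
    (M.map (· ^ 2)).sum + 2 * M.card = 3 * M.sum := by
  induction M using Multiset.induction_on with
  | empty => simp
  | cons a N ih =>
    have hN := ih (fun b hb => hM b (Multiset.mem_cons_of_mem hb))
      fun b hb => hM2 b (Multiset.mem_cons_of_mem hb)
    have hapos := hM a (Multiset.mem_cons_self a N)
    have ha2 := hM2 a (Multiset.mem_cons_self a N)
    simp only [Multiset.sum_cons, Multiset.card_cons, Multiset.map_cons]
    interval_cases a <;> omega

theorem eq_cons_or_eq_cons_cons_or_sum_sq_le (hM : ∀ a ∈ M, 0 < a) {d : ℕ}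
    (hsum : M.sum + 1 = d + M.card) :
    M = d ::ₘ Multiset.replicate (M.card - 1) 1 ∨
      M = (d - 1) ::ₘ 2 ::ₘ Multiset.replicate (M.card - 2) 1 ∨
      (M.map (· ^ 2)).sum ≤ (d - 2) ^ 2 + 7 + M.card := by
  by_cases! hM2 : ∀ a ∈ M, a ≤ 2
  · refine .inr (.inr ?_)
    have hsq := sum_sq_add_two_mul_card_eq hM hM2
    obtain hd | ⟨k, rfl⟩ : d < 2 ∨ ∃ k, d = k + 2 :=
      (Nat.lt_or_ge d 2).imp_right Nat.exists_eq_add_of_le'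
    · omega
    · rw [Nat.add_sub_cancel]
      zify at *
      nlinarith [sq_nonneg ((k : ℤ) - 1), sq_nonneg ((k : ℤ) - 2)]
  · obtain ⟨a, ha, ha3⟩ := hM2
    have had : a ≤ d := by
      obtain ⟨N, rfl⟩ := Multiset.exists_cons_of_mem ha
      have hN := card_le_sum_of_forall_pos fun b hb => hM b (Multiset.mem_cons_of_mem hb)
      simp only [Multiset.sum_cons, Multiset.card_cons] at hsum
      omega
    obtain rfl | rfl | had : a = d ∨ a = d - 1 ∨ a + 2 ≤ d := by omega
    · exact .inl (eq_cons_replicate_one_of_mem hM ha hsum)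
    · exact .inr (.inl (eq_cons_two_cons_replicate_one_of_mem hM ha (by omega)))
    · exact .inr (.inr (sum_sq_le_of_mem hM ha ha3 had hsum))

end PositiveMultisets

section SpectralMoments

variable {V : Type*} [Fintype V] {G : SimpleGraph V}

theorem adjMat_eq_adjMatrix [DecidableRel G.Adj] : adjMat G = G.adjMatrix ℝ := by
  ext x y
  rw [adjMat, Matrix.of_apply, adjMatrix_apply]
  congr

open scoped Matrix in
theorem sum_adjMatrix_mul_self [DecidableRel G.Adj] :
    ∑ x, ∑ y, (G.adjMatrix ℝ * G.adjMatrix ℝ) x y = ∑ x, (G.degree x : ℝ) ^ 2 := by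
  have hcol : 1 ᵥ* G.adjMatrix ℝ = fun x => (G.degree x : ℝ) :=
    funext fun x => by simp [adjMatrix_vecMul_apply]
  have hrow : G.adjMatrix ℝ *ᵥ 1 = fun x => (G.degree x : ℝ) :=
    funext fun x => by simp [adjMatrix_mulVec_apply]
  calc ∑ x, ∑ y, (G.adjMatrix ℝ * G.adjMatrix ℝ) x y
      = 1 ⬝ᵥ (G.adjMatrix ℝ * G.adjMatrix ℝ) *ᵥ 1 := by
        simp only [dotProduct, Matrix.mulVec, Pi.one_apply, one_mul, mul_one]
    _ = (1 ᵥ* G.adjMatrix ℝ) ⬝ᵥ (G.adjMatrix ℝ *ᵥ 1) := by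
        rw [← Matrix.mulVec_mulVec, Matrix.dotProduct_mulVec]
    _ = ∑ x, (G.degree x : ℝ) ^ 2 := by
        simp only [hcol, hrow, dotProduct, pow_two]

variable [DecidableEq V]

theorem adjMatrix_mul_self_apply [DecidableRel G.Adj] (x y : V) :
    (G.adjMatrix ℝ * G.adjMatrix ℝ) x y = (G.neighborFinset x ∩ G.neighborFinset y).card := by
  rw [adjMatrix_mul_apply]
  simp only [adjMatrix_apply, Finset.sum_boole, ← Finset.filter_mem_eq_inter, mem_neighborFinset,
    G.adj_comm y]

theorem spectralMoment_zero (G : SimpleGraph V) : spectralMoment G 0 = Fintype.card V := by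
  rw [spectralMoment, pow_zero, Matrix.trace_one]

theorem spectralMoment_two (G : SimpleGraph V) [DecidableRel G.Adj] :
    spectralMoment G 2 = ∑ x, (G.degree x : ℝ) := by
  simp only [spectralMoment, adjMat_eq_adjMatrix, pow_two, Matrix.trace, Matrix.diag_apply,
    adjMatrix_mul_self_apply_self]

theorem spectralMoment_eq_zero_of_odd (hG : G.IsBipartite) {k : ℕ} (hk : Odd k) :
    spectralMoment G k = 0 := by
  classical
  rw [spectralMoment, adjMat_eq_adjMatrix]
  refine Finset.sum_eq_zero fun x _ => ?_
  rw [Matrix.diag_apply, adjMatrix_pow_apply_eq_card_walk, Nat.cast_eq_zero,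
    Fintype.card_eq_zero_iff]
  refine ⟨fun ⟨w, hw⟩ => ?_⟩
  rw [Set.mem_ofPred_eq] at hw
  exact Nat.not_even_iff_odd.2 hk (hw ▸ two_colorable_iff_forall_loop_even.1 hG x w)

theorem sq_adjMatrix_mul_self_apply [DecidableRel G.Adj]
    (hG : ∀ ⦃x y⦄, x ≠ y → (G.commonNeighbors x y).Subsingleton) (x y : V) :
    (G.adjMatrix ℝ * G.adjMatrix ℝ) x y ^ 2 = (G.adjMatrix ℝ * G.adjMatrix ℝ) x y +
      if x = y then (G.degree x : ℝ) ^ 2 - G.degree x else 0 := by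
  split_ifs with hxy
  · rw [← hxy, adjMatrix_mul_self_apply_self]
    ring
  · have hle : (G.neighborFinset x ∩ G.neighborFinset y).card ≤ 1 :=
      Finset.card_le_one.2 fun z hz z' hz' =>
        hG hxy (by simpa [mem_commonNeighbors] using hz) (by simpa [mem_commonNeighbors] using hz')
    rw [adjMatrix_mul_self_apply, add_zero]
    norm_cast
    interval_cases (G.neighborFinset x ∩ G.neighborFinset y).card <;> rfl

theorem spectralMoment_four [DecidableRel G.Adj]
    (hG : ∀ ⦃x y⦄, x ≠ y → (G.commonNeighbors x y).Subsingleton) :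
    spectralMoment G 4 = 2 * ∑ x, (G.degree x : ℝ) ^ 2 - ∑ x, (G.degree x : ℝ) := by
  have hsymm : ∀ x y, (G.adjMatrix ℝ * G.adjMatrix ℝ) y x = (G.adjMatrix ℝ * G.adjMatrix ℝ) x y :=
    fun x y => by rw [adjMatrix_mul_self_apply, adjMatrix_mul_self_apply, Finset.inter_comm]
  calc spectralMoment G 4 = ∑ x, ∑ y, (G.adjMatrix ℝ * G.adjMatrix ℝ) x y ^ 2 := by
        rw [spectralMoment, adjMat_eq_adjMatrix, show 4 = 2 + 2 from rfl, pow_add,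
          pow_two (G.adjMatrix ℝ)]
        refine Finset.sum_congr rfl fun x _ => ?_
        rw [Matrix.diag_apply, Matrix.mul_apply]
        exact Finset.sum_congr rfl fun y _ => by rw [hsymm x y, pow_two]
    _ = 2 * ∑ x, (G.degree x : ℝ) ^ 2 - ∑ x, (G.degree x : ℝ) := by
        simp only [sq_adjMatrix_mul_self_apply hG, Finset.sum_add_distrib, sum_adjMatrix_mul_self,
          Finset.sum_ite_eq, Finset.mem_univ, if_true, Finset.sum_sub_distrib]
        ring

theorem commonNeighbors_subsingleton_of_isAcyclic {V : Type*} {G : SimpleGraph V}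
    (hG : G.IsAcyclic) {x y : V} (hxy : x ≠ y) : (G.commonNeighbors x y).Subsingleton := by
  intro z hz z' hz'
  rw [mem_commonNeighbors] at hz hz'
  have hpath : ∀ {c} (h : G.Adj x c) (h' : G.Adj c y), (Walk.cons h (Walk.cons h' .nil)).IsPath :=
    fun h h' => by simp [h.ne, h'.ne, hxy]
  have hpaths := (hG.subsingleton_path x y).elim ⟨_, hpath hz.1 hz.2.symm⟩
    ⟨_, hpath hz'.1 hz'.2.symm⟩
  simpa using congrArg (fun w => w.1.snd) hpaths

theorem sLt_of_sum_sq_degree_lt {H : SimpleGraph V} [DecidableRel G.Adj] [DecidableRel H.Adj]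
    (hG : G.IsTree) (hH : H.IsTree) (hcard : 5 ≤ Fintype.card V)
    (hlt : ∑ x, G.degree x ^ 2 < ∑ x, H.degree x ^ 2) : SLt G H := by
  have hsum : ∑ x, (G.degree x : ℝ) = ∑ x, (H.degree x : ℝ) := by
    have hedges := hG.card_edgeFinset.trans hH.card_edgeFinset.symm
    have hGsum := G.sum_degrees_eq_twice_card_edges
    have hHsum := H.sum_degrees_eq_twice_card_edges
    exact_mod_cast (show ∑ x, G.degree x = ∑ x, H.degree x by omega)
  have hfour : spectralMoment G 4 < spectralMoment H 4 := by
    rw [spectralMoment_four fun _ _ => commonNeighbors_subsingleton_of_isAcyclic hG.isAcyclic,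
      spectralMoment_four fun _ _ => commonNeighbors_subsingleton_of_isAcyclic hH.isAcyclic, hsum]
    have hltR : ∑ x, (G.degree x : ℝ) ^ 2 < ∑ x, (H.degree x : ℝ) ^ 2 := by exact_mod_cast hlt
    linarith
  refine ⟨4, by omega, by omega, fun i hi => ?_, hfour⟩
  interval_cases i
  · rw [spectralMoment_zero, spectralMoment_zero]
  · rw [spectralMoment_eq_zero_of_odd hG.isBipartite odd_one,
      spectralMoment_eq_zero_of_odd hH.isBipartite odd_one]
  · rw [spectralMoment_two, spectralMoment_two, hsum]
  · rw [spectralMoment_eq_zero_of_odd hG.isBipartite (by decide),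
      spectralMoment_eq_zero_of_odd hH.isBipartite (by decide)]

end SpectralMoments

section Bipartition

variable {V : Type*} [Fintype V] {G : SimpleGraph V} {s : Finset V}

theorem mem_compl_iff_notMem_compl_of_adj [DecidableEq V]
    (hs : ∀ ⦃x y⦄, G.Adj x y → (x ∈ s ↔ y ∉ s)) ⦃x y : V⦄ (hxy : G.Adj x y) :
    x ∈ sᶜ ↔ y ∉ sᶜ := by
  rw [Finset.mem_compl, Finset.mem_compl, not_iff_not]
  exact hs hxy

theorem isBipartiteWith_compl [DecidableEq V] (hs : ∀ ⦃x y⦄, G.Adj x y → (x ∈ s ↔ y ∉ s)) :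
    G.IsBipartiteWith (s : Set V) (sᶜ : Finset V) where
  disjoint := Finset.disjoint_coe.2 disjoint_compl_right
  mem_of_adj x y hxy := by
    have hxy := hs hxy
    simp only [Finset.mem_coe, Finset.mem_compl]
    tauto

variable [DecidableRel G.Adj]

/-- The multiset of the degrees in `G` of the vertices of `s`. -/
def degreeMultiset (G : SimpleGraph V) [DecidableRel G.Adj] (s : Finset V) : Multiset ℕ :=
  s.val.map fun x => G.degree x

@[simp]
theorem card_degreeMultiset : (degreeMultiset G s).card = s.card :=
  Multiset.card_map _ _

theorem degree_mem_degreeMultiset {x : V} (hx : x ∈ s) : G.degree x ∈ degreeMultiset G s :=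
  Multiset.mem_map_of_mem _ hx

theorem sum_map_sq_degreeMultiset :
    ((degreeMultiset G s).map (· ^ 2)).sum = ∑ x ∈ s, G.degree x ^ 2 := by
  rw [degreeMultiset, Multiset.map_map]
  rfl

theorem sum_degreeMultiset_add_one [DecidableEq V] (hG : G.IsTree)
    (hs : ∀ ⦃x y⦄, G.Adj x y → (x ∈ s ↔ y ∉ s)) :
    (degreeMultiset G s).sum + 1 = sᶜ.card + (degreeMultiset G s).card := by
  have hsum : (degreeMultiset G s).sum = G.edgeFinset.card :=
    isBipartiteWith_sum_degrees_eq_card_edges (isBipartiteWith_compl hs)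
  rw [hsum, hG.card_edgeFinset, card_degreeMultiset, Finset.card_compl_add_card]

theorem pos_of_mem_degreeMultiset [Nontrivial V] (hG : G.IsTree) :
    ∀ d ∈ degreeMultiset G s, 0 < d := by
  intro d hd
  obtain ⟨x, -, rfl⟩ := Multiset.mem_map.1 hd
  exact hG.connected.preconnected.degree_pos_of_nontrivial x

variable [DecidableEq V] [Nontrivial V]

theorem degreeMultiset_eq_cons (hG : G.IsTree) (hs : ∀ ⦃x y⦄, G.Adj x y → (x ∈ s ↔ y ∉ s)) {x : V}
    (hx : x ∈ s) (hdeg : G.degree x = sᶜ.card) :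
    degreeMultiset G s = sᶜ.card ::ₘ Multiset.replicate (s.card - 1) 1 := by
  rw [← hdeg, ← card_degreeMultiset (G := G)]
  exact eq_cons_replicate_one_of_mem (pos_of_mem_degreeMultiset hG) (degree_mem_degreeMultiset hx)
    (hdeg ▸ sum_degreeMultiset_add_one hG hs)

theorem degreeMultiset_eq_cons_cons (hG : G.IsTree) (hs : ∀ ⦃x y⦄, G.Adj x y → (x ∈ s ↔ y ∉ s))
    {x : V} (hx : x ∈ s) (hdeg : G.degree x + 1 = sᶜ.card) :
    degreeMultiset G s = (sᶜ.card - 1) ::ₘ 2 ::ₘ Multiset.replicate (s.card - 2) 1 := by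
  have hsum := sum_degreeMultiset_add_one hG hs
  rw [← hdeg, Nat.add_sub_cancel, ← card_degreeMultiset (G := G)]
  exact eq_cons_two_cons_replicate_one_of_mem (pos_of_mem_degreeMultiset hG)
    (degree_mem_degreeMultiset hx) (by omega)

theorem degreeMultiset_eq_cons_or_eq_cons_cons_or_sum_sq_degree_le (hG : G.IsTree)
    (hs : ∀ ⦃x y⦄, G.Adj x y → (x ∈ s ↔ y ∉ s)) {m d : ℕ} (hm : s.card = m) (hd : sᶜ.card = d) :
    degreeMultiset G s = d ::ₘ Multiset.replicate (m - 1) 1 ∨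
      degreeMultiset G s = (d - 1) ::ₘ 2 ::ₘ Multiset.replicate (m - 2) 1 ∨
      ∑ x ∈ s, G.degree x ^ 2 ≤ (d - 2) ^ 2 + 7 + m := by
  rw [← sum_map_sq_degreeMultiset, ← hm, ← hd, ← card_degreeMultiset (G := G) (s := s)]
  exact eq_cons_or_eq_cons_cons_or_sum_sq_le (pos_of_mem_degreeMultiset hG)
    (sum_degreeMultiset_add_one hG hs)

theorem sum_sq_degree_add_one_le (hG : G.IsTree) (hs : ∀ ⦃x y⦄, G.Adj x y → (x ∈ s ↔ y ∉ s)) :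
    ∑ x ∈ s, G.degree x ^ 2 + 1 ≤ sᶜ.card ^ 2 + s.card := by
  rw [← sum_map_sq_degreeMultiset, ← card_degreeMultiset (G := G) (s := s)]
  exact sum_sq_add_one_le (pos_of_mem_degreeMultiset hG) (sum_degreeMultiset_add_one hG hs)

end Bipartition

section HeightTwo

/-- `G` is a tree of height at most two with root `r`, whose children are the vertices of `s`: the
vertices outside `s` and different from `r` are the grandchildren, each with its parent in `s` as
only neighbor. -/
structure IsHeightTwo {V : Type*} (G : SimpleGraph V) (r : V) (s : Finset V) : Prop where
  mem_iff_notMem_of_adj : ∀ ⦃x y⦄, G.Adj x y → (x ∈ s ↔ y ∉ s)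
  root_notMem : r ∉ s
  root_adj : ∀ x ∈ s, G.Adj r x
  existsUnique_adj : ∀ y ∉ s, y ≠ r → ∃! x, G.Adj y x

/-- The position of a vertex in a rooted tree of height two whose children of the root are indexed
by `α`; grandchildren with the same parent share their position. -/
inductive Position (α : Type*)
  | root
  | child (a : α)
  | grandchild (parent : α)

namespace Position

/-- Adjacency of two vertices of a tree of height two, in terms of their positions. -/
protected def Adj {α : Type*} : Position α → Position α → Prop
  | root, child _ | child _, root => True
  | child a, grandchild b | grandchild b, child a => a = b
  | _, _ => False

/-- Reindexing of the children of the root. -/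
def congr {α β : Type*} (e : α ≃ β) : Position α ≃ Position β where
  toFun
    | root => root
    | child a => child (e a)
    | grandchild a => grandchild (e a)
  invFun
    | root => root
    | child b => child (e.symm b)
    | grandchild b => grandchild (e.symm b)
  left_inv i := by cases i <;> simp
  right_inv i := by cases i <;> simp

theorem congr_adj {α β : Type*} (e : α ≃ β) {i j : Position α} :
    (congr e i).Adj (congr e j) ↔ i.Adj j := by
  cases i <;> cases j <;> simp [congr, Position.Adj]

end Position

theorem exists_equiv_of_card_fiber_eq {V W ι : Type*} [Fintype V] [Fintype W] [DecidableEq ι]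
    (c : V → ι) (d : W → ι)
    (h : ∀ i, (Finset.univ.filter (c · = i)).card = (Finset.univ.filter (d · = i)).card) :
    ∃ σ : V ≃ W, ∀ x, d (σ x) = c x := by
  refine ⟨Equiv.ofFiberEquiv (f := c) (g := d) fun i => Fintype.equivOfCardEq ?_,
    fun x => Equiv.ofFiberEquiv_map _ x⟩
  rw [Fintype.card_subtype, Fintype.card_subtype, h]

theorem exists_equiv_of_map_val_eq {V W ι : Type*} {s : Finset V} {t : Finset W} {c : V → ι}
    {d : W → ι} (h : s.val.map c = t.val.map d) : ∃ σ : s ≃ t, ∀ x, d (σ x) = c x := by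
  classical
  rw [← Multiset.attach_map_val' s.val, ← Multiset.attach_map_val' t.val] at h
  refine exists_equiv_of_card_fiber_eq (fun x : s => c x) (fun y : t => d y) fun i => ?_
  have hi := congrArg (Multiset.count i) h
  simp only [Multiset.count_map, eq_comm (a := i)] at hi
  exact hi

namespace IsHeightTwo

variable {V W : Type*} {G : SimpleGraph V} {r : V} {s : Finset V}

theorem connected (hG : IsHeightTwo G r s) : G.Connected := by
  refine (connected_iff_exists_forall_reachable G).2 ⟨r, fun y => ?_⟩
  by_cases hy : y ∈ s
  · exact (hG.root_adj y hy).reachable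
  by_cases hyr : y = r
  · exact hyr ▸ .refl _
  obtain ⟨x, hyx, -⟩ := hG.existsUnique_adj y hy hyr
  have hx : x ∈ s := (hG.mem_iff_notMem_of_adj hyx.symm).2 hy
  exact (hG.root_adj x hx).reachable.trans hyx.symm.reachable

theorem root_adj_iff (hG : IsHeightTwo G r s) {x : V} : G.Adj r x ↔ x ∈ s :=
  ⟨fun hrx => (hG.mem_iff_notMem_of_adj hrx.symm).2 hG.root_notMem, hG.root_adj x⟩

theorem neighborFinset_root [Fintype V] [DecidableRel G.Adj] (hG : IsHeightTwo G r s) :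
    G.neighborFinset r = s := by
  ext x
  rw [mem_neighborFinset, hG.root_adj_iff]

theorem isTree [Finite V] (hG : IsHeightTwo G r s) : G.IsTree := by
  classical
  have := Fintype.ofFinite V
  have hr : r ∈ sᶜ := Finset.mem_compl.2 hG.root_notMem
  have hleaf : ∀ y ∈ sᶜ.erase r, G.degree y = 1 := fun y hy =>
    degree_eq_one_iff_existsUnique_adj.2 (hG.existsUnique_adj y
      (Finset.mem_compl.1 (Finset.mem_of_mem_erase hy)) (Finset.ne_of_mem_erase hy))
  refine isTree_iff_connected_and_card.2 ⟨hG.connected, ?_⟩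
  rw [Nat.card_eq_fintype_card, ← edgeFinset_card, Nat.card_eq_fintype_card,
    ← isBipartiteWith_sum_degrees_eq_card_edges' (isBipartiteWith_compl hG.mem_iff_notMem_of_adj),
    ← Finset.add_sum_erase _ _ hr, Finset.sum_congr rfl hleaf, Finset.sum_const,
    smul_eq_mul, mul_one, ← card_neighborFinset_eq_degree, hG.neighborFinset_root, add_assoc,
    Finset.card_erase_add_one hr, Finset.card_add_card_compl]

theorem degreeMultiset_compl [Fintype V] [DecidableEq V] [Nontrivial V] [DecidableRel G.Adj]
    (hG : IsHeightTwo G r s) :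
    degreeMultiset G sᶜ = s.card ::ₘ Multiset.replicate (sᶜ.card - 1) 1 := by
  have hdeg : G.degree r = sᶜᶜ.card := by
    rw [← card_neighborFinset_eq_degree, hG.neighborFinset_root, compl_compl]
  simpa only [compl_compl] using degreeMultiset_eq_cons hG.isTree
    (mem_compl_iff_notMem_compl_of_adj hG.mem_iff_notMem_of_adj)
    (Finset.mem_compl.2 hG.root_notMem) hdeg

theorem of_degree_eq_card [Fintype V] [Nontrivial V] [DecidableRel G.Adj] (hG : G.IsTree)
    (hs : ∀ ⦃x y⦄, G.Adj x y → (x ∈ s ↔ y ∉ s)) (hr : r ∉ s) (hdeg : G.degree r = s.card) :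
    IsHeightTwo G r s := by
  have hsub : G.neighborFinset r ⊆ s := fun x hx =>
    (hs ((mem_neighborFinset _ _ _).1 hx).symm).2 hr
  have hN : G.neighborFinset r = s :=
    Finset.eq_of_subset_of_card_le hsub (by rw [card_neighborFinset_eq_degree, hdeg])
  have hadj : ∀ x ∈ s, G.Adj r x := fun x hx => by rwa [← mem_neighborFinset, hN]
  refine ⟨hs, hr, hadj, fun y hy hyr => ?_⟩
  obtain ⟨x, hyx⟩ :=
    (degree_pos_iff_exists_adj G y).1 (hG.connected.preconnected.degree_pos_of_nontrivial y)
  refine ⟨x, hyx, fun x' hyx' => ?_⟩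
  have hmem : ∀ {z}, G.Adj y z → z ∈ G.commonNeighbors y r := fun hyz =>
    ⟨hyz, hadj _ ((hs hyz.symm).2 hy)⟩
  exact commonNeighbors_subsingleton_of_isAcyclic hG.isAcyclic hyr (hmem hyx') (hmem hyx)

theorem exists_of_card_mem [Fintype V] [DecidableEq V] [Nontrivial V]
    [DecidableRel G.Adj] (hG : G.IsTree) (hs : ∀ ⦃x y⦄, G.Adj x y → (x ∈ s ↔ y ∉ s))
    (hmem : s.card ∈ degreeMultiset G sᶜ) : ∃ r, IsHeightTwo G r s := by
  obtain ⟨r, hr, hdeg⟩ := Multiset.mem_map.1 hmem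
  exact ⟨r, of_degree_eq_card hG hs (Finset.mem_compl.1 hr) hdeg⟩

open scoped Classical in
/-- The position of a vertex of a tree of height two. -/
noncomputable def position (hG : IsHeightTwo G r s) (x : V) : Position s :=
  if hx : x ∈ s then .child ⟨x, hx⟩
  else if hxr : x = r then .root
  else .grandchild ⟨(hG.existsUnique_adj x hx hxr).choose,
    (hG.mem_iff_notMem_of_adj (hG.existsUnique_adj x hx hxr).choose_spec.1.symm).2 hx⟩

theorem position_eq_root_iff (hG : IsHeightTwo G r s) {x : V} :
    hG.position x = .root ↔ x = r := by
  have := hG.root_notMem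
  unfold position
  split_ifs <;> aesop

theorem position_eq_child_iff (hG : IsHeightTwo G r s) {x : V} {a : s} :
    hG.position x = .child a ↔ x = a := by
  have := hG.root_notMem
  unfold position
  split_ifs <;> aesop

theorem position_eq_grandchild_iff (hG : IsHeightTwo G r s) {x : V} {a : s} :
    hG.position x = .grandchild a ↔ x ≠ r ∧ G.Adj a x := by
  unfold position
  split_ifs with hx hxr
  · simp [mt (hG.mem_iff_notMem_of_adj (x := a) (y := x)) (by simp [hx])]
  · simp [hxr]
  · have hex := hG.existsUnique_adj x hx hxr
    simp only [Position.grandchild.injEq, Subtype.ext_iff, ne_eq, hxr, not_false_iff, true_and]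
    exact ⟨fun h => h ▸ hex.choose_spec.1.symm, fun h => (hex.choose_spec.2 a h.symm).symm⟩

theorem adj_iff_position_adj (hG : IsHeightTwo G r s) {x y : V} :
    G.Adj x y ↔ (hG.position x).Adj (hG.position y) := by
  cases hx : hG.position x with
  | root =>
    have hadj : G.Adj r y ↔ ∃ a, hG.position y = .child a := by
      simp [hG.root_adj_iff, position_eq_child_iff]
    rw [hG.position_eq_root_iff.1 hx, hadj]
    cases hG.position y <;> simp [Position.Adj]
  | child a =>
    have hadj : G.Adj a y ↔ hG.position y = .root ∨ hG.position y = .grandchild a := by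
      rw [position_eq_root_iff, position_eq_grandchild_iff]
      have har := (hG.root_adj a a.2).symm
      by_cases hyr : y = r <;> simp [hyr, har]
    rw [hG.position_eq_child_iff.1 hx, hadj]
    cases hG.position y <;> simp [Position.Adj, eq_comm]
  | grandchild a =>
    obtain ⟨hxr, hax⟩ := hG.position_eq_grandchild_iff.1 hx
    have hxs : x ∉ s := (hG.mem_iff_notMem_of_adj hax).1 a.2
    have hadj : G.Adj x y ↔ hG.position y = .child a := by
      rw [position_eq_child_iff]
      exact ⟨fun hxy => (hG.existsUnique_adj x hxs hxr).unique hxy hax.symm,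
        fun hya => hya ▸ hax.symm⟩
    rw [hadj]
    cases hG.position y <;> simp [Position.Adj, eq_comm]

section Iso

variable [Fintype V] [DecidableEq (Position s)]

theorem card_position_eq_root (hG : IsHeightTwo G r s) :
    (Finset.univ.filter (hG.position · = .root)).card = 1 :=
  Finset.card_eq_one.2 ⟨r, by ext; simp [position_eq_root_iff]⟩

theorem card_position_eq_child (hG : IsHeightTwo G r s) (a : s) :
    (Finset.univ.filter (hG.position · = .child a)).card = 1 :=
  Finset.card_eq_one.2 ⟨a, by ext; simp [position_eq_child_iff]⟩

theorem card_position_eq_grandchild [DecidableRel G.Adj] (hG : IsHeightTwo G r s) (a : s) :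
    (Finset.univ.filter (hG.position · = .grandchild a)).card = G.degree a - 1 := by
  classical
  have hfiber : Finset.univ.filter (hG.position · = .grandchild a) =
      (G.neighborFinset a).erase r := by
    ext
    simp [position_eq_grandchild_iff]
  have hr : r ∈ G.neighborFinset a := (mem_neighborFinset _ _ _).2 (hG.root_adj a a.2).symm
  rw [hfiber, Finset.card_erase_of_mem hr, card_neighborFinset_eq_degree]

end Iso

theorem nonempty_iso [Fintype V] [Fintype W] {H : SimpleGraph W} [DecidableRel G.Adj]
    [DecidableRel H.Adj] {r' : W} {t : Finset W} (hG : IsHeightTwo G r s)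
    (hH : IsHeightTwo H r' t) (hdeg : degreeMultiset G s = degreeMultiset H t) :
    Nonempty (G ≃g H) := by
  classical
  obtain ⟨e, he⟩ := exists_equiv_of_map_val_eq hdeg
  obtain ⟨σ, hσ⟩ : ∃ σ : V ≃ W, ∀ x, hH.position (σ x) = Position.congr e (hG.position x) := by
    refine exists_equiv_of_card_fiber_eq _ _ fun i => ?_
    obtain ⟨i, rfl⟩ := (Position.congr e).surjective i
    simp only [EmbeddingLike.apply_eq_iff_eq]
    cases i with
    | root => exact hG.card_position_eq_root.trans hH.card_position_eq_root.symm
    | child a => exact (hG.card_position_eq_child a).trans (hH.card_position_eq_child (e a)).symm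
    | grandchild a =>
      exact (hG.card_position_eq_grandchild a).trans
        ((he a).symm ▸ (hH.card_position_eq_grandchild (e a)).symm)
  refine ⟨⟨σ, fun {x y} => ?_⟩⟩
  rw [hH.adj_iff_position_adj, hσ, hσ, Position.congr_adj, hG.adj_iff_position_adj]

end IsHeightTwo

end HeightTwo

section Trees

/-- The vertices `0, …, m` of `Fin n` except `a`: these are the children of the root `a = 0` of
`BTree` for `m = q`, and of the root `a = 1` of `DTree` for `m = p`. -/
def childSet (n m a : ℕ) : Finset (Fin n) :=
  Finset.univ.filter fun i => i.val ≠ a ∧ i.val ≤ m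

@[simp]
theorem mem_childSet {n m a : ℕ} {i : Fin n} : i ∈ childSet n m a ↔ i.val ≠ a ∧ i.val ≤ m := by
  rw [childSet, Finset.mem_filter_univ]

theorem card_childSet {n m a : ℕ} (ha : a ≤ m) (hm : m < n) : (childSet n m a).card = m := by
  have herase : childSet n m a = (Finset.Iic ⟨m, hm⟩).erase ⟨a, ha.trans_lt hm⟩ := by
    ext i
    simp [Fin.ext_iff, Fin.le_def]
  rw [herase, Finset.card_erase_of_mem (Finset.mem_Iic.2 (Fin.mk_le_mk.2 ha)), Fin.card_Iic,
    Nat.add_sub_cancel]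

variable {p q k l : ℕ}

theorem isHeightTwo_BTree (hp : k + l < p) (hq : l + 2 ≤ q) :
    IsHeightTwo (BTree p q k l) ⟨0, by omega⟩ (childSet (p + q) q 0) where
  mem_iff_notMem_of_adj x y hxy := by
    simp only [BTree, fromRel_adj, ne_eq] at hxy
    simp only [mem_childSet]
    omega
  root_notMem := by simp
  root_adj x hx := by
    simp only [mem_childSet] at hx
    simp only [BTree, fromRel_adj, Fin.ext_iff, ne_eq, true_and]
    omega
  existsUnique_adj y hy hy0 := by
    simp only [mem_childSet, Fin.ext_iff, ne_eq] at hy hy0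
    simp only [BTree, fromRel_adj, Fin.ext_iff, ne_eq]
    refine ⟨⟨if y.val ≤ q + k then 2 else if y.val ≤ q + k + l then y.val - (q + k) + 2 else 1,
      by split_ifs <;> omega⟩, by dsimp only; split_ifs <;> omega, fun x hx => Fin.ext ?_⟩
    dsimp only
    split_ifs <;> omega

theorem isHeightTwo_DTree (hp : l + 2 ≤ p) (hq : k + l < q) :
    IsHeightTwo (DTree p q k l) ⟨1, by omega⟩ (childSet (p + q) p 1) where
  mem_iff_notMem_of_adj x y hxy := by
    simp only [DTree, fromRel_adj, ne_eq] at hxy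
    simp only [mem_childSet]
    omega
  root_notMem := by simp
  root_adj x hx := by
    simp only [mem_childSet] at hx
    simp only [DTree, fromRel_adj, Fin.ext_iff, ne_eq, true_and, and_true]
    omega
  existsUnique_adj y hy hy0 := by
    simp only [mem_childSet, Fin.ext_iff, ne_eq] at hy hy0
    simp only [DTree, fromRel_adj, Fin.ext_iff, ne_eq]
    refine ⟨⟨if y.val ≤ p + k then 2 else if y.val ≤ p + k + l then y.val - (p + k) + 2 else 0,
      by split_ifs <;> omega⟩, by dsimp only; split_ifs <;> omega, fun x hx => Fin.ext ?_⟩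
    dsimp only
    split_ifs <;> omega

theorem degree_BTree_one [DecidableRel (BTree p q k l).Adj] (hp : k + l < p) (hq : l + 2 ≤ q) :
    (BTree p q k l).degree ⟨1, by omega⟩ = p - k - l := by
  have hN : (BTree p q k l).neighborFinset ⟨1, by omega⟩ =
      insert ⟨0, by omega⟩ (Finset.Ioi ⟨q + k + l, by omega⟩) := by
    ext x
    rw [mem_neighborFinset]
    simp only [BTree, fromRel_adj, Finset.mem_insert, Finset.mem_Ioi, Fin.lt_def,
      Fin.ext_iff, ne_eq, true_and, and_true]
    omega
  rw [← card_neighborFinset_eq_degree, hN, Finset.card_insert_of_notMem (by simp), Fin.card_Ioi]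
  dsimp only
  omega

theorem degree_DTree_zero [DecidableRel (DTree p q k l).Adj] (hp : l + 2 ≤ p) (hq : k + l < q) :
    (DTree p q k l).degree ⟨0, by omega⟩ = q - k - l := by
  have hN : (DTree p q k l).neighborFinset ⟨0, by omega⟩ =
      insert ⟨1, by omega⟩ (Finset.Ioi ⟨p + k + l, by omega⟩) := by
    ext x
    rw [mem_neighborFinset]
    simp only [DTree, fromRel_adj, Finset.mem_insert, Finset.mem_Ioi, Fin.lt_def,
      Fin.ext_iff, ne_eq, true_and]
    omega
  rw [← card_neighborFinset_eq_degree, hN,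
    Finset.card_insert_of_notMem (by simp only [Finset.mem_Ioi, Fin.lt_def]; omega), Fin.card_Ioi]
  dsimp only
  omega

theorem card_compl_childSet {a m n d : ℕ} (ha : a ≤ m) (hm : m < n) (hn : n = d + m) :
    (childSet n m a)ᶜ.card = d := by
  rw [Finset.card_compl, Fintype.card_fin, card_childSet ha hm, hn, Nat.add_sub_cancel]

theorem degreeMultiset_BTree_zero_zero [DecidableRel (BTree p q 0 0).Adj] (hp : 1 ≤ p)
    (hq : 2 ≤ q) :
    degreeMultiset (BTree p q 0 0) (childSet (p + q) q 0) = p ::ₘ Multiset.replicate (q - 1) 1 := by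
  have hB := isHeightTwo_BTree (k := 0) (l := 0) (by omega : 0 + 0 < p) hq
  have : Nontrivial (Fin (p + q)) := Fin.nontrivial_iff_two_le.2 (by omega)
  have hM := degreeMultiset_eq_cons hB.isTree hB.mem_iff_notMem_of_adj (x := ⟨1, by omega⟩)
    (by simp only [mem_childSet]; omega)
    (by rw [degree_BTree_one hp hq, card_compl_childSet] <;> omega)
  rwa [card_childSet (by omega) (by omega), card_compl_childSet (by omega) (by omega) rfl] at hM

theorem degreeMultiset_BTree_zero_one [DecidableRel (BTree p q 0 1).Adj] (hp : 2 ≤ p)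
    (hq : 3 ≤ q) :
    degreeMultiset (BTree p q 0 1) (childSet (p + q) q 0) =
      (p - 1) ::ₘ 2 ::ₘ Multiset.replicate (q - 2) 1 := by
  have hB := isHeightTwo_BTree (k := 0) (l := 1) (by omega : 0 + 1 < p) hq
  have : Nontrivial (Fin (p + q)) := Fin.nontrivial_iff_two_le.2 (by omega)
  have hM := degreeMultiset_eq_cons_cons hB.isTree hB.mem_iff_notMem_of_adj (x := ⟨1, by omega⟩)
    (by simp only [mem_childSet]; omega)
    (by rw [degree_BTree_one (by omega) hq, card_compl_childSet] <;> omega)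
  rwa [card_childSet (by omega) (by omega), card_compl_childSet (by omega) (by omega) rfl] at hM

theorem degreeMultiset_DTree_zero_one [DecidableRel (DTree p q 0 1).Adj] (hp : 3 ≤ p)
    (hq : 2 ≤ q) :
    degreeMultiset (DTree p q 0 1) (childSet (p + q) p 1) =
      (q - 1) ::ₘ 2 ::ₘ Multiset.replicate (p - 2) 1 := by
  have hD := isHeightTwo_DTree (k := 0) (l := 1) hp (by omega : 0 + 1 < q)
  have : Nontrivial (Fin (p + q)) := Fin.nontrivial_iff_two_le.2 (by omega)
  have hM := degreeMultiset_eq_cons_cons hD.isTree hD.mem_iff_notMem_of_adj (x := ⟨0, by omega⟩)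
    (by simp) (by rw [degree_DTree_zero hp (by omega), card_compl_childSet] <;> omega)
  rwa [card_childSet (by omega) (by omega),
    card_compl_childSet (by omega) (by omega) (add_comm p q)] at hM

theorem sum_sq_degree_DTree_zero_one [DecidableRel (DTree p q 0 1).Adj] (hp : 3 ≤ p)
    (hq : 2 ≤ q) :
    ∑ x, (DTree p q 0 1).degree x ^ 2 = (q - 1) ^ 2 + 4 + (p - 2) + (p ^ 2 + (q - 1)) := by
  have hD := isHeightTwo_DTree (k := 0) (l := 1) hp (by omega : 0 + 1 < q)
  have : Nontrivial (Fin (p + q)) := Fin.nontrivial_iff_two_le.2 (by omega)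
  have hM := hD.degreeMultiset_compl
  rw [card_childSet (by omega) (by omega),
    card_compl_childSet (by omega) (by omega) (add_comm p q)] at hM
  rw [← Finset.sum_add_sum_compl (childSet (p + q) p 1), ← sum_map_sq_degreeMultiset,
    ← sum_map_sq_degreeMultiset, hM, degreeMultiset_DTree_zero_one hp hq]
  simp only [Multiset.map_cons, Multiset.map_replicate, Multiset.sum_cons, Multiset.sum_replicate,
    one_pow, smul_eq_mul, mul_one]
  ring

end Trees

section Classification

variable {p q : ℕ}

theorem add_lt_of_sum_sq_bounds (hq : 5 ≤ q) (h : q + 4 < 2 * p) {X Y : ℕ}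
    (hXY : (X ≤ q ^ 2 + (p - 1) ∧ Y ≤ (p - 2) ^ 2 + 7 + q) ∨
      (X ≤ (q - 1) ^ 2 + 4 + (p - 2) ∧
        (Y ≤ (p - 1) ^ 2 + 4 + (q - 2) ∨ Y ≤ (p - 2) ^ 2 + 7 + q)) ∨
      (X ≤ (q - 2) ^ 2 + 7 + p ∧ Y + 1 ≤ p ^ 2 + q)) :
    X + Y < (q - 1) ^ 2 + 4 + (p - 2) + (p ^ 2 + (q - 1)) := by
  obtain ⟨a, rfl⟩ := Nat.exists_eq_add_of_le' (show 5 ≤ p by omega)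
  obtain ⟨b, rfl⟩ := Nat.exists_eq_add_of_le' hq
  simp only [Nat.reduceSubDiff] at hXY ⊢
  rcases hXY with ⟨hX, hY⟩ | ⟨hX, hY | hY⟩ | ⟨hX, hY⟩ <;> ring_nf at hX hY ⊢ <;> omega

theorem card_compl_of_card_eq {A : Finset (Fin (p + q))} (hA : A.card = p) : Aᶜ.card = q := by
  rw [Finset.card_compl, hA, Fintype.card_fin, Nat.add_sub_cancel_left]

variable {T : SimpleGraph (Fin (p + q))} [DecidableRel T.Adj] {A : Finset (Fin (p + q))}

theorem nonempty_iso_BTree_or_sum_sq_degree_compl_le (hp : 2 ≤ p) (hq : 3 ≤ q) (hT : T.IsTree)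
    (hA : A.card = p) (hbip : ∀ ⦃x y⦄, T.Adj x y → (x ∈ A ↔ y ∉ A))
    (hmem : q ∈ degreeMultiset T A) :
    Nonempty (T ≃g BTree p q 0 0) ∨ Nonempty (T ≃g BTree p q 0 1) ∨
      ∑ x ∈ Aᶜ, T.degree x ^ 2 ≤ (p - 2) ^ 2 + 7 + q := by
  classical
  have : Nontrivial (Fin (p + q)) := Fin.nontrivial_iff_two_le.2 (by omega)
  have hbip' := mem_compl_iff_notMem_compl_of_adj hbip
  have hAc := card_compl_of_card_eq hA
  obtain ⟨r, hr⟩ := IsHeightTwo.exists_of_card_mem hT hbip' (by rwa [compl_compl, hAc])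
  refine (degreeMultiset_eq_cons_or_eq_cons_cons_or_sum_sq_degree_le hT hbip' hAc
    (by rwa [compl_compl])).imp (fun hhub => ?_) (.imp_left fun hnear => ?_)
  · exact hr.nonempty_iso (isHeightTwo_BTree (by omega) (by omega))
      (hhub.trans (degreeMultiset_BTree_zero_zero (by omega) (by omega)).symm)
  · exact hr.nonempty_iso (isHeightTwo_BTree (by omega) (by omega))
      (hnear.trans (degreeMultiset_BTree_zero_one hp hq).symm)

theorem nonempty_iso_DTree_or_sum_sq_degree_compl_le (hp : 3 ≤ p) (hq : 2 ≤ q) (hT : T.IsTree)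
    (hA : A.card = p) (hbip : ∀ ⦃x y⦄, T.Adj x y → (x ∈ A ↔ y ∉ A))
    (hM : degreeMultiset T A = (q - 1) ::ₘ 2 ::ₘ Multiset.replicate (p - 2) 1) :
    Nonempty (T ≃g DTree p q 0 1) ∨ ∑ x ∈ Aᶜ, T.degree x ^ 2 ≤ (p - 1) ^ 2 + 4 + (q - 2) ∨
      ∑ x ∈ Aᶜ, T.degree x ^ 2 ≤ (p - 2) ^ 2 + 7 + q := by
  classical
  have : Nontrivial (Fin (p + q)) := Fin.nontrivial_iff_two_le.2 (by omega)
  refine (degreeMultiset_eq_cons_or_eq_cons_cons_or_sum_sq_degree_le hT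
    (mem_compl_iff_notMem_compl_of_adj hbip) (card_compl_of_card_eq hA)
    (by rwa [compl_compl])).imp (fun hhub => ?_) (.imp_left fun hnear => ?_)
  · obtain ⟨r, hr⟩ := IsHeightTwo.exists_of_card_mem hT hbip (by simp [hhub, hA])
    exact hr.nonempty_iso (isHeightTwo_DTree (by omega) (by omega))
      (hM.trans (degreeMultiset_DTree_zero_one hp hq).symm)
  · simp [← sum_map_sq_degreeMultiset, hnear, add_assoc]

theorem nonempty_iso_or_sum_sq_degree_lt [DecidableRel (DTree p q 0 1).Adj] (hq : 5 ≤ q)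
    (h : q + 4 < 2 * p) (hT : TreeBip p q T) :
    Nonempty (T ≃g BTree p q 0 0) ∨ Nonempty (T ≃g BTree p q 0 1) ∨
      Nonempty (T ≃g DTree p q 0 1) ∨
      ∑ x, T.degree x ^ 2 < ∑ x, (DTree p q 0 1).degree x ^ 2 := by
  obtain ⟨htree, A, hA, hbip⟩ := hT
  have : Nontrivial (Fin (p + q)) := Fin.nontrivial_iff_two_le.2 (by omega)
  have hAc := card_compl_of_card_eq hA
  have hlt := @add_lt_of_sum_sq_bounds p q hq h (∑ x ∈ A, T.degree x ^ 2)
    (∑ x ∈ Aᶜ, T.degree x ^ 2)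
  rw [Finset.sum_add_sum_compl, ← sum_sq_degree_DTree_zero_one (by omega) (by omega)] at hlt
  obtain hM | hM | hX :=
    degreeMultiset_eq_cons_or_eq_cons_cons_or_sum_sq_degree_le htree hbip hA hAc
  · have hX : ∑ x ∈ A, T.degree x ^ 2 ≤ q ^ 2 + (p - 1) := by
      simp [← sum_map_sq_degreeMultiset, hM]
    refine (nonempty_iso_BTree_or_sum_sq_degree_compl_le (by omega) (by omega) htree hA hbip
      (by simp [hM])).imp_right (.imp_right fun hY => .inr (hlt (.inl ⟨hX, hY⟩)))
  · have hX : ∑ x ∈ A, T.degree x ^ 2 ≤ (q - 1) ^ 2 + 4 + (p - 2) := by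
      simp [← sum_map_sq_degreeMultiset, hM, add_assoc]
    exact .inr (.inr ((nonempty_iso_DTree_or_sum_sq_degree_compl_le (by omega) (by omega) htree hA
      hbip hM).imp_right fun hY => hlt (.inr (.inl ⟨hX, hY⟩))))
  · have hY := sum_sq_degree_add_one_le htree (mem_compl_iff_notMem_compl_of_adj hbip)
    rw [compl_compl, hA, hAc] at hY
    exact .inr (.inr (.inr (hlt (.inr (.inr ⟨hX, hY⟩)))))

end Classification

theorem stmt_5_general (p q : ℕ) (hq : 5 ≤ q) (h : q + 4 < 2 * p)
    (T : SimpleGraph (Fin (p + q))) (hT : TreeBip p q T)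
    (h0 : ¬ Nonempty (T ≃g BTree p q 0 0))
    (h1 : ¬ Nonempty (T ≃g BTree p q 0 1))
    (h2 : ¬ Nonempty (T ≃g DTree p q 0 1)) :
    SLt T (DTree p q 0 1) := by
  classical
  have hD : (DTree p q 0 1).IsTree := (isHeightTwo_DTree (by omega) (by omega)).isTree
  have hlt : ∑ x, T.degree x ^ 2 < ∑ x, (DTree p q 0 1).degree x ^ 2 := by
    simpa only [h0, h1, h2, false_or] using nonempty_iso_or_sum_sq_degree_lt hq h hT
  exact sLt_of_sum_sq_degree_lt hT.1 hD (by rw [Fintype.card_fin]; omega) hlt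

/-- For `4 ≤ p < q`, `n = p + q` and `2p > q + 4`, every tree
`T ∈ 𝒯_n^{p,q}` isomorphic to none of `B_{p,q}^{0,0}`, `B_{p,q}^{0,1}`,
`D_{p,q}^{0,1}` satisfies `T ≺_s D_{p,q}^{0,1}`: in this case `D_{p,q}^{0,1}` is the
unique third last tree in the S-order among `𝒯_n^{p,q}`. -/
theorem stmt_5 (p q : ℕ) (hp : 4 ≤ p) (hpq : p < q) (h : q + 4 < 2 * p)
    (T : SimpleGraph (Fin (p + q))) (hT : TreeBip p q T)
    (h0 : ¬ Nonempty (T ≃g BTree p q 0 0))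
    (h1 : ¬ Nonempty (T ≃g BTree p q 0 1))
    (h2 : ¬ Nonempty (T ≃g DTree p q 0 1)) :
    SLt T (DTree p q 0 1) :=
  stmt_5_general p q (by omega) h T hT h0 h1 h2
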